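/- A typed monoid T = (M, G, E) is isomorphic (via a bijective typed monoid homomorphism) to the syntactic typed monoid syn(L) of some language L over some finite alphabet if, and only if, the following three conditions hold: T is reduced; M is generated as a monoid by E (every element of M is a finite product of elements of E); and G has exactly four or exactly two elements. -/

import Mathlib

universe u v w

/-- A typed monoid structure on a monoid `M`: a Boolean algebra `types` of subsets of `M`
(the types) together with a finite set `units` of units. -/
structure TypedMonoidOn (M : Type u) : Type u where
  types : Set (Set M)
  units : Set M
  empty_mem : ∅ ∈ types
  univ_mem : Set.univ ∈ types
  union_mem : ∀ {A B : Set M}, A ∈ types → B ∈ types → A ∪ B ∈ types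
  inter_mem : ∀ {A B : Set M}, A ∈ types → B ∈ types → A ∩ B ∈ types
  compl_mem : ∀ {A : Set M}, A ∈ types → Aᶜ ∈ types
  units_finite : units.Finite

/-- A typed monoid homomorphism: a monoid homomorphism `h₁`, a Boolean algebra
homomorphism `h₂` on types, and a map `h₃` on units, such that
`h₁(A) = h₂(A) ∩ h₁(S)` for every type `A` and `h₁(e) = h₃(e)` for every unit `e`. -/
structure TypedHom {S : Type u} {T : Type v} [Monoid S] [Monoid T]
    (T₁ : TypedMonoidOn S) (T₂ : TypedMonoidOn T) where
  h₁ : S →* T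
  h₂ : Set S → Set T
  h₃ : S → T
  h₂_mem : ∀ {A : Set S}, A ∈ T₁.types → h₂ A ∈ T₂.types
  h₂_empty : h₂ ∅ = ∅
  h₂_univ : h₂ Set.univ = Set.univ
  h₂_union : ∀ {A B : Set S}, A ∈ T₁.types → B ∈ T₁.types → h₂ (A ∪ B) = h₂ A ∪ h₂ B
  h₂_inter : ∀ {A B : Set S}, A ∈ T₁.types → B ∈ T₁.types → h₂ (A ∩ B) = h₂ A ∩ h₂ B
  h₂_compl : ∀ {A : Set S}, A ∈ T₁.types → h₂ Aᶜ = (h₂ A)ᶜ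
  h₃_mem : ∀ {e : S}, e ∈ T₁.units → h₃ e ∈ T₂.units
  cond_i : ∀ {A : Set S}, A ∈ T₁.types → ⇑h₁ '' A = h₂ A ∩ Set.range ⇑h₁
  cond_ii : ∀ {e : S}, e ∈ T₁.units → h₁ e = h₃ e

/-- A typed monoid homomorphism is injective if all three components are. -/
def TypedHom.IsInjective {S : Type u} {T : Type v} [Monoid S] [Monoid T]
    {T₁ : TypedMonoidOn S} {T₂ : TypedMonoidOn T} (h : TypedHom T₁ T₂) : Prop :=
  Function.Injective h.h₁ ∧ Set.InjOn h.h₂ T₁.types ∧ Set.InjOn h.h₃ T₁.units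

/-- A typed monoid homomorphism is surjective if all three components are. -/
def TypedHom.IsSurjective {S : Type u} {T : Type v} [Monoid S] [Monoid T]
    {T₁ : TypedMonoidOn S} {T₂ : TypedMonoidOn T} (h : TypedHom T₁ T₂) : Prop :=
  Function.Surjective h.h₁ ∧ T₂.types ⊆ h.h₂ '' T₁.types ∧ T₂.units ⊆ h.h₃ '' T₁.units

/-- A typed monoid homomorphism is bijective if all three components are. -/
def TypedHom.IsBijective {S : Type u} {T : Type v} [Monoid S] [Monoid T]
    {T₁ : TypedMonoidOn S} {T₂ : TypedMonoidOn T} (h : TypedHom T₁ T₂) : Prop :=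
  h.IsInjective ∧ h.IsSurjective

/-- `T₁` divides `T₂` if some typed submonoid of `T₂` (i.e. a typed monoid admitting an
injective typed homomorphism into `T₂`) surjects onto `T₁` by a typed homomorphism. -/
def TypedDivides {S : Type u} {T : Type v} [Monoid S] [Monoid T]
    (T₁ : TypedMonoidOn S) (T₂ : TypedMonoidOn T) : Prop :=
  ∃ (U : Type v) (_iU : Monoid U) (T' : TypedMonoidOn U)
    (hinj : TypedHom T' T₂) (hsur : TypedHom T' T₁),
    hinj.IsInjective ∧ hsur.IsSurjective

/-- The typed monoid `(Σ*, B_L, Σ)` associated with a language `L` over a finite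
alphabet `A`: the free monoid with the Boolean algebra `{∅, L, Lᶜ, Σ*}` of types
and the letters as units. -/
def langTM (A : Type u) [Fintype A] (L : Set (FreeMonoid A)) :
    TypedMonoidOn (FreeMonoid A) where
  types := {∅, L, Lᶜ, Set.univ}
  units := Set.range FreeMonoid.of
  empty_mem := by simp
  univ_mem := by simp
  union_mem := by
    rintro A B (rfl | rfl | rfl | rfl) (rfl | rfl | rfl | rfl) <;>
      simp [Set.union_self, Set.union_compl_self, Set.compl_union_self,
        Set.empty_union, Set.union_empty, Set.univ_union, Set.union_univ]
  inter_mem := by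
    rintro A B (rfl | rfl | rfl | rfl) (rfl | rfl | rfl | rfl) <;>
      simp [Set.inter_self, Set.inter_compl_self, Set.compl_inter_self,
        Set.empty_inter, Set.inter_empty, Set.univ_inter, Set.inter_univ]
  compl_mem := by
    rintro A (rfl | rfl | rfl | rfl) <;> simp
  units_finite := Set.finite_range _

/-- A typed monoid recognizes a language `L ⊆ Σ*` if there is a typed monoid
homomorphism from `(Σ*, B_L, Σ)` to it. -/
def Recognizes {M : Type u} [Monoid M] (T : TypedMonoidOn M)
    {A : Type v} [Fintype A] (L : Set (FreeMonoid A)) : Prop :=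
  Nonempty (TypedHom (langTM A L) T)


lemma four_ncard {M : Type u} [Nonempty M] (S : Set M) :
    ({∅, S, Sᶜ, Set.univ} : Set (Set M)).ncard = 4 ∨
    ({∅, S, Sᶜ, Set.univ} : Set (Set M)).ncard = 2 := by
  have h0 : (∅ : Set M) ≠ Set.univ := Set.empty_ne_univ
  by_cases h1 : S = ∅
  · right
    have : ({∅, S, Sᶜ, Set.univ} : Set (Set M)) = {∅, Set.univ} := by
      subst h1; simp
    rw [this, Set.ncard_pair h0]
  by_cases h2 : S = Set.univ
  · right
    have : ({∅, S, Sᶜ, Set.univ} : Set (Set M)) = {∅, Set.univ} := by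
      subst h2; ext; simp
    rw [this, Set.ncard_pair h0]
  left
  have h3 : S ≠ Sᶜ := fun h => by
    obtain ⟨x⟩ := ‹Nonempty M›
    have := Set.ext_iff.1 h x
    simp at this
  have h4 : Sᶜ ≠ Set.univ := by simpa using h1
  have h5 : (∅ : Set M) ≠ Sᶜ := by
    intro h; exact h2 (Set.compl_empty_iff.1 h.symm)
  rw [Set.ncard_insert_of_notMem, Set.ncard_insert_of_notMem, Set.ncard_pair h4]
  · simp; tauto
  · simp only [Set.mem_insert_iff, Set.mem_singleton_iff]
    rintro (h | h | h)
    · exact h1 h.symm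
    · exact h5 h
    · exact h0 h

lemma types_eq {M : Type u} [Nonempty M] (T : TypedMonoidOn M)
    (h : T.types.ncard = 4 ∨ T.types.ncard = 2) :
    ∃ S : Set M, T.types = {∅, S, Sᶜ, Set.univ} := by
  have hfin : T.types.Finite := Set.finite_of_ncard_ne_zero (by omega)
  have h0 : (∅ : Set M) ≠ Set.univ := Set.empty_ne_univ
  have sub : ∀ S ∈ T.types, ({∅, S, Sᶜ, Set.univ} : Set (Set M)) ⊆ T.types := by
    rintro S hS B (rfl | rfl | rfl | rfl)
    exacts [T.empty_mem, hS, T.compl_mem hS, T.univ_mem]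
  rcases h with h | h
  · have : ∃ S ∈ T.types, S ∉ ({∅, Set.univ} : Set (Set M)) := by
      by_contra! hc
      have := Set.ncard_le_ncard (s := T.types) (t := {∅, Set.univ}) hc (by simp)
      rw [Set.ncard_pair h0] at this
      omega
    obtain ⟨S, hS, hS'⟩ := this
    refine ⟨S, (Set.eq_of_subset_of_ncard_le (sub S hS) ?_ hfin).symm⟩
    have h3 : ({∅, Set.univ, S} : Set (Set M)) ⊆ {∅, S, Sᶜ, Set.univ} := by
      intro B; simp; tauto
    have h4 := Set.ncard_le_ncard h3 (by simp)
    rw [Set.ncard_eq_three.2 ⟨∅, Set.univ, S, h0, fun h => hS' (by simp [← h]),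
      fun h => hS' (by simp [← h]), rfl⟩] at h4
    rcases four_ncard S with h5 | h5 <;> omega
  · refine ⟨∅, (Set.eq_of_subset_of_ncard_le (sub _ T.empty_mem) ?_ hfin).symm⟩
    rcases four_ncard (∅ : Set M) with h5 | h5 <;> omega

/-- Transport of a typed monoid along a multiplicative equivalence. -/
def transportTM {M : Type u} {N : Type v} [Monoid M] [Monoid N] (e : M ≃* N)
    (T : TypedMonoidOn M) : TypedMonoidOn N where
  types := (fun B => e '' B) '' T.types
  units := e '' T.units
  empty_mem := ⟨∅, T.empty_mem, by simp⟩
  univ_mem := ⟨Set.univ, T.univ_mem, by simp [e.surjective.range_eq]⟩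
  union_mem := by
    rintro _ _ ⟨A, hA, rfl⟩ ⟨B, hB, rfl⟩
    exact ⟨_, T.union_mem hA hB, Set.image_union ..⟩
  inter_mem := by
    rintro _ _ ⟨A, hA, rfl⟩ ⟨B, hB, rfl⟩
    exact ⟨_, T.inter_mem hA hB, Set.image_inter e.injective⟩
  compl_mem := by
    rintro _ ⟨A, hA, rfl⟩
    exact ⟨_, T.compl_mem hA, Set.image_compl_eq e.bijective⟩
  units_finite := T.units_finite.image _

/-- The transport homomorphism. -/
def transportHom {M : Type u} {N : Type v} [Monoid M] [Monoid N] (e : M ≃* N)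
    (T : TypedMonoidOn M) : TypedHom T (transportTM e T) where
  h₁ := e.toMonoidHom
  h₂ := fun B => e '' B
  h₃ := e
  h₂_mem := fun hA => ⟨_, hA, rfl⟩
  h₂_empty := by simp
  h₂_univ := by simp [e.surjective.range_eq]
  h₂_union := fun _ _ => Set.image_union ..
  h₂_inter := fun _ _ => Set.image_inter e.injective
  h₂_compl := fun _ => Set.image_compl_eq e.bijective
  h₃_mem := fun he => ⟨_, he, rfl⟩
  cond_i := by intro A _; simp [e.surjective.range_eq]
  cond_ii := fun _ => rfl

lemma transportHom_bij {M : Type u} {N : Type v} [Monoid M] [Monoid N] (e : M ≃* N)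
    (T : TypedMonoidOn M) : (transportHom e T).IsBijective :=
  ⟨⟨e.injective, (Set.image_injective.2 e.injective).injOn, e.injective.injOn⟩,
    e.surjective, subset_rfl, subset_rfl⟩

/-- A typed monoid `T = (M, G, E)` is isomorphic, via a bijective typed monoid
homomorphism, to the syntactic typed monoid `syn(L) = (Σ*, B_L, Σ)/∼_L` of some
language `L` over some finite alphabet if, and only if: `T` is reduced, `M` is
generated by its units `E`, and `G` has exactly four or exactly two elements. -/
theorem syntactic_typed_monoid_characterization {M : Type u} [Monoid M]
    (T : TypedMonoidOn M) :
    (∃ (A : Type u) (_ : Fintype A) (L : Set (FreeMonoid A))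
        (c : Con (FreeMonoid A)),
      (∀ u v : FreeMonoid A, c u v ↔
        ∀ w x : FreeMonoid A, (w * u * x ∈ L ↔ w * v * x ∈ L)) ∧
      ∃ synL : TypedMonoidOn c.Quotient,
        synL.types =
          (fun B => ⇑c.mk' '' B) '' ({∅, L, Lᶜ, Set.univ} : Set (Set (FreeMonoid A))) ∧
        synL.units = ⇑c.mk' '' (Set.range FreeMonoid.of) ∧
        ∃ h : TypedHom T synL, h.IsBijective)
    ↔ ((∀ s₁ s₂ : M,
          (∀ x y : M, ∀ A ∈ T.types, (x * s₁ * y ∈ A ↔ x * s₂ * y ∈ A)) → s₁ = s₂) ∧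
       (∀ m : M, m ∈ Submonoid.closure T.units) ∧
       (T.types.ncard = 4 ∨ T.types.ncard = 2)) := by
  constructor
  · rintro ⟨A, _, L, c, hc, synL, htypes, hunits, h, ⟨inj1, inj2, inj3⟩, sur1, sur2, sur3⟩
    have hsat : ∀ u : FreeMonoid A, c.mk' u ∈ c.mk' '' L ↔ u ∈ L := by
      intro u
      refine ⟨?_, fun hu => ⟨u, hu, rfl⟩⟩
      rintro ⟨v, hv, hvu⟩
      have := (hc v u).1 (c.eq.1 hvu) 1 1
      simp only [one_mul, mul_one] at this
      exact this.1 hv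
    have himg : ∀ B ∈ T.types, h.h₂ B = h.h₁ '' B := by
      intro B hB
      rw [h.cond_i hB, sur1.range_eq, Set.inter_univ]
    refine ⟨?_, ?_, ?_⟩
    · intro s₁ s₂ hs
      apply inj1
      obtain ⟨u, hu⟩ := c.mk'_surjective (h.h₁ s₁)
      obtain ⟨v, hv⟩ := c.mk'_surjective (h.h₁ s₂)
      rw [← hu, ← hv]
      refine c.eq.2 ((hc u v).2 fun w x => ?_)
      obtain ⟨a, ha⟩ := sur1 (c.mk' w)
      obtain ⟨b, hb⟩ := sur1 (c.mk' x)
      have hL : c.mk' '' L ∈ synL.types := by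
        rw [htypes]; exact ⟨L, by simp, rfl⟩
      obtain ⟨B, hB, hBL⟩ := sur2 hL
      rw [himg B hB] at hBL
      rw [← hsat, ← hsat, ← hBL, map_mul, map_mul, map_mul, map_mul, hu, hv, ← ha, ← hb,
        ← map_mul, ← map_mul, ← map_mul, ← map_mul, inj1.mem_set_image, inj1.mem_set_image]
      exact hs a b B hB
    · have key : ∀ w : FreeMonoid A, ∃ m ∈ Submonoid.closure T.units, h.h₁ m = c.mk' w := by
        intro w
        induction w using FreeMonoid.inductionOn' with
        | one => exact ⟨1, one_mem _, by simp⟩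
        | of_mul a w ih =>
          obtain ⟨m, hm, hmw⟩ := ih
          have ha : c.mk' (FreeMonoid.of a) ∈ synL.units := by
            rw [hunits]; exact ⟨_, ⟨a, rfl⟩, rfl⟩
          obtain ⟨e, he, hea⟩ := sur3 ha
          refine ⟨e * m, mul_mem (Submonoid.subset_closure he) hm, ?_⟩
          rw [map_mul, map_mul, hmw, h.cond_ii he, hea]
      intro m
      obtain ⟨u, hu⟩ := c.mk'_surjective (h.h₁ m)
      obtain ⟨m', hm', e⟩ := key u
      rw [hu] at e
      rwa [← inj1 e]
    · have h1 : synL.types = h.h₂ '' T.types := by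
        apply Set.Subset.antisymm sur2
        rintro _ ⟨B, hB, rfl⟩
        exact h.h₂_mem hB
      have h2 : synL.types = {∅, c.mk' '' L, (c.mk' '' L)ᶜ, Set.univ} := by
        have h3 : c.mk' '' Lᶜ = (c.mk' '' L)ᶜ := by
          ext q
          obtain ⟨u, rfl⟩ := c.mk'_surjective q
          constructor
          · rintro ⟨v, hv, hvu⟩ hu
            rw [← hvu, hsat] at hu
            exact hv hu
          · intro hu
            exact ⟨u, fun hh => hu ((hsat u).2 hh), rfl⟩
        rw [htypes]
        simp only [Set.image_insert_eq, Set.image_singleton, Set.image_empty, h3,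
          Set.image_univ, c.mk'_surjective.range_eq]
      rw [← inj2.ncard_image, ← h1, h2]
      exact four_ncard _
  · rintro ⟨hred, hgen, hcard⟩
    obtain ⟨S, hS⟩ := types_eq T hcard
    let φ : FreeMonoid T.units →* M := FreeMonoid.lift Subtype.val
    have hφ : Function.Surjective φ := by
      rw [← MonoidHom.mrange_eq_top, FreeMonoid.mrange_lift, Subtype.range_coe]
      exact top_unique fun m _ => hgen m
    let e : M ≃* (Con.ker φ).Quotient := (Con.quotientKerEquivOfSurjective φ hφ).symm
    have he : ∀ w, e (φ w) = (Con.ker φ).mk' w := by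
      intro w
      exact (MulEquiv.symm_apply_eq _).2 rfl
    have hpre : ∀ B : Set M, (Con.ker φ).mk' '' (φ ⁻¹' B) = e '' B := by
      intro B
      conv_rhs => rw [← Set.image_preimage_eq B hφ, Set.image_image]
      simp only [he]
    refine ⟨T.units, T.units_finite.fintype, φ ⁻¹' S, Con.ker φ, ?_, transportTM e T, ?_, ?_,
      transportHom e T, transportHom_bij e T⟩
    · intro u v
      rw [Con.ker_rel]
      constructor
      · intro h w x
        simp only [Set.mem_preimage, map_mul, h]
      · intro h
        apply hred
        intro x y B hB
        obtain ⟨w, rfl⟩ := hφ x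
        obtain ⟨z, rfl⟩ := hφ y
        have := h w z
        simp only [Set.mem_preimage, map_mul] at this
        rw [hS] at hB
        rcases hB with rfl | rfl | rfl | rfl
        · simp
        · exact this
        · exact not_congr this
        · simp
    · change (fun B => e '' B) '' T.types = _
      rw [hS]
      simp only [Set.image_insert_eq, Set.image_singleton, ← Set.preimage_compl, hpre]
      simp only [Set.image_empty, Set.image_univ, e.surjective.range_eq,
        (Con.ker φ).mk'_surjective.range_eq]
    · change e '' T.units = _
      ext q
      constructor
      · rintro ⟨m, hm, rfl⟩
        exact ⟨_, ⟨⟨m, hm⟩, rfl⟩, by rw [← he]; simp [φ]⟩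
      · rintro ⟨_, ⟨m, rfl⟩, rfl⟩
        exact ⟨m, m.2, by rw [← he]; simp [φ]⟩
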